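/- Consider the degree-three game G constructed from an Exact Cover by 3-Sets instance (n̂, 𝒜, 𝒞) as described, with desired sets O_{a_i} = {T_{a_i}} for every element player a_i and O_{C_j} = {T_{C_j}, F_{C_j}} for every set player C_j. If for some real δ with 0 ≤ δ < 1 there exists a payment promise 𝒱 such that 𝒳⋆_{G[𝒱]} ⊆ ∏_{i∈N} O_i and cost(𝒱) ≤ δ, then (n̂, 𝒜, 𝒞) admits an exact cover; indeed 𝒮 = {C_j ∈ 𝒞 : the set of undominated strategies of C_j in G[𝒱] equals {T_{C_j}}} is an exact cover. -/

import Mathlib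

/-!
Since some profile is undominated and every undominated profile has all element players on `T`, the
strategy `F` of an element player `a` is dominated by `T` in `G[V]`. Domination has to be bought: at
an undominated profile `σ`, the payment to `a` is at least what `a` would gain in `G` by deviating
to `F`. That gain is 1 as soon as 0, 2 or 3 of the sets containing `a` play `T`, so a cost below 1
forces exactly one of them to do so, for every element and every undominated profile.

A set player with two undominated strategies could switch and thereby change the number of chosen
sets around one of its elements; hence its undominated strategy is unique. The sets whose
undominated strategy is `T` therefore contain each element exactly once, and double counting
incidences shows that there are `m / 3` of them.
-/

/-- In a game with player set `ι` and strategy sets `S i`, strategy `x` of player `i`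
(weakly) dominates strategy `y`: `x` is at least as good against every profile of the
other players' strategies and strictly better against at least one. -/
def Dominates {ι : Type*} [DecidableEq ι] {S : ι → Type*}
    (U : ι → (∀ j, S j) → ℝ) (i : ι) (x y : S i) : Prop :=
  (∀ σ : ∀ j, S j, U i (Function.update σ i y) ≤ U i (Function.update σ i x)) ∧
  (∃ σ : ∀ j, S j, U i (Function.update σ i y) < U i (Function.update σ i x))

/-- A strategy of player `i` is undominated if no strategy of player `i` dominates it. -/
def Undominated {ι : Type*} [DecidableEq ι] {S : ι → Type*}
    (U : ι → (∀ j, S j) → ℝ) (i : ι) (x : S i) : Prop :=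
  ¬ ∃ y : S i, Dominates U i y x

/-- The set `𝒳⋆` of strategy profiles consisting entirely of undominated strategies. -/
def UndomProfiles {ι : Type*} [DecidableEq ι] {S : ι → Type*}
    (U : ι → (∀ j, S j) → ℝ) : Set (∀ j, S j) :=
  {σ | ∀ i, Undominated U i (σ i)}

/-- The cost of a payment promise `V` for the game with utilities `U`:
the maximum, over undominated profiles of the modified game `G[V]`,
of the total payment. -/
noncomputable def gameCost {ι : Type*} [DecidableEq ι] [Fintype ι] {S : ι → Type*}
    (U V : ι → (∀ j, S j) → ℝ) : ℝ :=
  sSup ((fun σ => ∑ i, V i σ) '' UndomProfiles (fun i σ => U i σ + V i σ))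

/-- The rectangular strategy-profile region `O_1 × ⋯ × O_n`. -/
def rectSet {ι : Type*} {S : ι → Type*} (O : ∀ i, Set (S i)) : Set (∀ j, S j) :=
  {σ | ∀ i, σ i ∈ O i}

/-- `S` is an exact cover of the X3C instance with `3 * nh` elements (indexed by
`ZMod m`, `m = 3 * nh`) and sets `C`: `|S| = nh` and every element is covered. -/
def IsExactCover (m nh : ℕ) (C : ZMod m → Finset (ZMod m)) (S : Set (ZMod m)) : Prop :=
  S.ncard = nh ∧ ∀ a : ZMod m, ∃ j ∈ S, a ∈ C j

/-- The utilities of the degree-three graphical game: players are elements (left) and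
sets (right), every player plays a Boolean (`true` = the `T`-strategy). An element
player `a` receives 1 iff it plays its `F`-strategy and the number of sets containing
`a` that play their `T`-strategy is 0, 2 or 3; set players always receive 0. -/
def dGame (m : ℕ) [NeZero m] (C : ZMod m → Finset (ZMod m)) :
    (ZMod m ⊕ ZMod m) → ((ZMod m ⊕ ZMod m) → Bool) → ℝ :=
  fun p σ =>
    match p with
    | Sum.inl a =>
        if σ (Sum.inl a) = false ∧
            ((Finset.univ.filter fun j => a ∈ C j ∧ σ (Sum.inr j) = true).card = 0 ∨
             (Finset.univ.filter fun j => a ∈ C j ∧ σ (Sum.inr j) = true).card = 2 ∨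
             (Finset.univ.filter fun j => a ∈ C j ∧ σ (Sum.inr j) = true).card = 3)
        then 1 else 0
    | Sum.inr _ => 0

/-- The desired strategy sets: `O_{a_i} = {T_{a_i}}` for element players and
`O_{C_j} = {T_{C_j}, F_{C_j}}` for set players. -/
def dDesired (m : ℕ) : (ZMod m ⊕ ZMod m) → Set Bool :=
  fun p => match p with
  | Sum.inl _ => {true}
  | Sum.inr _ => Set.univ

section Game

variable {ι : Type*} [DecidableEq ι] {S : ι → Type*} {U V : ι → (∀ j, S j) → ℝ} {i : ι}

theorem Dominates.irrefl (x : S i) : ¬ Dominates U i x x :=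
  fun ⟨_, _, h⟩ => h.false

theorem Dominates.trans {x y z : S i} (hxy : Dominates U i x y) (hyz : Dominates U i y z) :
    Dominates U i x z :=
  ⟨fun σ => (hyz.1 σ).trans (hxy.1 σ), hxy.2.imp fun σ h => (hyz.1 σ).trans_lt h⟩

theorem exists_undominated [Finite (S i)] [Nonempty (S i)] (U : ι → (∀ j, S j) → ℝ) :
    ∃ x, Undominated U i x := by
  let r : S i → S i → Prop := Dominates U i
  have : IsTrans (S i) r := ⟨fun _ _ _ => Dominates.trans⟩
  have : Std.Irrefl r := ⟨Dominates.irrefl⟩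
  obtain ⟨x, -, hx⟩ := (Finite.wellFounded_of_trans_of_irrefl r).has_min Set.univ Set.univ_nonempty
  exact ⟨x, fun ⟨y, hy⟩ => hx y (Set.mem_univ y) hy⟩

theorem undomProfiles_nonempty [∀ i, Finite (S i)] [∀ i, Nonempty (S i)]
    (U : ι → (∀ j, S j) → ℝ) : (UndomProfiles U).Nonempty :=
  Classical.skolem.1 fun _ => exists_undominated U

theorem update_mem_undomProfiles {σ : ∀ j, S j} (hσ : σ ∈ UndomProfiles U) {x : S i}
    (hx : Undominated U i x) : Function.update σ i x ∈ UndomProfiles U :=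
  (Function.forall_update_iff σ fun j y => Undominated U j y).2 ⟨hx, fun j _ => hσ j⟩

theorem Undominated.mem_of_undomProfiles_subset [∀ i, Finite (S i)] [∀ i, Nonempty (S i)]
    {O : ∀ j, Set (S j)} (hO : UndomProfiles U ⊆ rectSet O) {x : S i}
    (hx : Undominated U i x) : x ∈ O i := by
  obtain ⟨σ, hσ⟩ := undomProfiles_nonempty U
  simpa only [Function.update_self] using hO (update_mem_undomProfiles hσ hx) i

theorem payment_le_gameCost [Fintype ι] [∀ i, Finite (S i)] {σ : ∀ j, S j} (hV : ∀ j, 0 ≤ V j σ)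
    (hσ : σ ∈ UndomProfiles (fun j τ => U j τ + V j τ)) (i : ι) : V i σ ≤ gameCost U V :=
  calc
    V i σ ≤ ∑ j, V j σ := Finset.single_le_sum (fun j _ => hV j) (Finset.mem_univ i)
    _ ≤ gameCost U V := le_csSup (Set.toFinite _).bddAbove (Set.mem_image_of_mem _ hσ)

theorem Dominates.deviation_gain_le_gameCost [Fintype ι] [∀ i, Finite (S i)] {σ : ∀ j, S j}
    {y : S i} (hdom : Dominates (fun j τ => U j τ + V j τ) i (σ i) y) (hV : ∀ j τ, 0 ≤ V j τ)
    (hσ : σ ∈ UndomProfiles (fun j τ => U j τ + V j τ)) :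
    U i (Function.update σ i y) - U i σ ≤ gameCost U V := by
  have hle := hdom.1 σ
  rw [Function.update_eq_self] at hle
  linarith [hV i (Function.update σ i y), payment_le_gameCost (fun j => hV j σ) hσ i]

theorem dominates_not_of_not_undominated {U : ι → (ι → Bool) → ℝ} {b : Bool}
    (hb : ¬ Undominated U i b) : Dominates U i (!b) b := by
  obtain ⟨c, hc⟩ := not_not.1 hb
  have hne : c ≠ b := by
    rintro rfl
    exact Dominates.irrefl _ hc
  exact Bool.eq_not_of_ne hne ▸ hc

end Game

section ChosenSets

open scoped Finset

variable {α β : Type*} [Fintype β]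

/-- The collection of sets selected by a strategy profile: the set players `j : β` whose strategy is
`T`, encoded by `true`. -/
def chosenSets (σ : α ⊕ β → Bool) : Finset β :=
  {j | σ (Sum.inr j) = true}

theorem mem_chosenSets {σ : α ⊕ β → Bool} {j : β} :
    j ∈ chosenSets σ ↔ σ (Sum.inr j) = true := by
  simp [chosenSets]

variable [DecidableEq α] [DecidableEq β]

theorem chosenSets_update_inl (σ : α ⊕ β → Bool) (a : α) (b : Bool) :
    chosenSets (Function.update σ (Sum.inl a) b) = chosenSets σ := by
  simp [chosenSets]

theorem chosenSets_update_inr_true (σ : α ⊕ β → Bool) (j : β) :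
    chosenSets (Function.update σ (Sum.inr j) true) = insert j (chosenSets σ) := by
  ext k
  by_cases hk : k = j <;> simp [mem_chosenSets, hk]

theorem chosenSets_update_inr_false (σ : α ⊕ β → Bool) (j : β) :
    chosenSets (Function.update σ (Sum.inr j) false) = (chosenSets σ).erase j := by
  ext k
  by_cases hk : k = j <;> simp [mem_chosenSets, hk]

theorem injective_card_filter_chosenSets_update (C : β → Finset α) {a : α} {j : β} (ha : a ∈ C j)
    (σ : α ⊕ β → Bool) :
    Function.Injective fun b : Bool =>
      #{k ∈ chosenSets (Function.update σ (Sum.inr j) b) | a ∈ C k} := by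
  rw [Bool.injective_iff]
  simp only [chosenSets_update_inr_true, chosenSets_update_inr_false]
  have hsub : {k ∈ (chosenSets σ).erase j | a ∈ C k} ⊆ {k ∈ insert j (chosenSets σ) | a ∈ C k} :=
    Finset.filter_subset_filter _ ((Finset.erase_subset _ _).trans (Finset.subset_insert _ _))
  have hssub : {k ∈ (chosenSets σ).erase j | a ∈ C k} ⊂ {k ∈ insert j (chosenSets σ) | a ∈ C k} :=
    (Finset.ssubset_iff_of_subset hsub).2 ⟨j, by simp [ha], by simp⟩
  exact (Finset.card_lt_card hssub).ne

theorem setOf_undominated_inr_eq_singleton {W : α ⊕ β → (α ⊕ β → Bool) → ℝ} {C : β → Finset α}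
    {a : α} {n : ℕ} (hW : ∀ σ ∈ UndomProfiles W, #{k ∈ chosenSets σ | a ∈ C k} = n) {j : β}
    (ha : a ∈ C j) {σ : α ⊕ β → Bool} (hσ : σ ∈ UndomProfiles W) :
    {b | Undominated W (Sum.inr j) b} = {σ (Sum.inr j)} := by
  refine Set.eq_singleton_iff_unique_mem.2 ⟨hσ (Sum.inr j), fun b hb => ?_⟩
  have hcount : ∀ c, Undominated W (Sum.inr j) c →
      #{k ∈ chosenSets (Function.update σ (Sum.inr j) c) | a ∈ C k} = n :=
    fun c hc => hW _ (update_mem_undomProfiles hσ hc)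
  exact injective_card_filter_chosenSets_update C ha σ
    ((hcount b hb).trans (hcount _ (hσ (Sum.inr j))).symm)

end ChosenSets

section ExactCover

open scoped Finset

variable {m : ℕ} {C : ZMod m → Finset (ZMod m)}

theorem isExactCover_of_card_filter_eq_one [NeZero m] {nh : ℕ} (hm : m = 3 * nh)
    {T : Finset (ZMod m)} (hC : ∀ j ∈ T, #(C j) = 3) (hT : ∀ a, #{j ∈ T | a ∈ C j} = 1) :
    IsExactCover m nh C T := by
  refine ⟨?_, fun a => ?_⟩
  · have hcount : #(Finset.univ : Finset (ZMod m)) * 1 = #T * 3 :=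
      Finset.card_mul_eq_card_mul (fun a j => a ∈ C j) (fun a _ => hT a)
        fun j hj => by simpa [Finset.bipartiteBelow] using hC j hj
    rw [Finset.card_univ, ZMod.card] at hcount
    rw [Set.ncard_coe_finset]
    lia
  · obtain ⟨j, hj⟩ := Finset.card_pos.1 (hT a ▸ Nat.one_pos)
    exact ⟨j, Finset.mem_filter.1 hj⟩

variable [NeZero m] {a : ZMod m} {σ : ZMod m ⊕ ZMod m → Bool}

theorem dGame_inl_eq_zero (h : σ (Sum.inl a) = true) : dGame m C (Sum.inl a) σ = 0 := by
  simp [dGame, h]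

theorem dGame_inl_eq_one (h : σ (Sum.inl a) = false) (hle : #{j ∈ chosenSets σ | a ∈ C j} ≤ 3)
    (hne : #{j ∈ chosenSets σ | a ∈ C j} ≠ 1) : dGame m C (Sum.inl a) σ = 1 := by
  rw [chosenSets, Finset.filter_filter] at hle hne
  simp only [and_comm] at hle hne
  simp only [dGame, h, true_and]
  exact if_pos (by lia)

theorem card_filter_chosenSets_eq_one (hocc : {j : ZMod m | a ∈ C j}.ncard ≤ 3)
    {V : ZMod m ⊕ ZMod m → (ZMod m ⊕ ZMod m → Bool) → ℝ} (hV : ∀ p τ, 0 ≤ V p τ)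
    (hF : ¬ Undominated (fun p τ => dGame m C p τ + V p τ) (Sum.inl a) false)
    (hcost : gameCost (dGame m C) V < 1)
    (hσ : σ ∈ UndomProfiles (fun p τ => dGame m C p τ + V p τ)) :
    #{j ∈ chosenSets σ | a ∈ C j} = 1 := by
  have hle : #{j ∈ chosenSets σ | a ∈ C j} ≤ 3 := by
    have hsub : (↑({j ∈ chosenSets σ | a ∈ C j} : Finset (ZMod m)) : Set (ZMod m)) ⊆
        {j | a ∈ C j} := fun j hj => (Finset.mem_filter.1 hj).2
    rw [← Set.ncard_coe_finset]
    exact (Set.ncard_le_ncard hsub).trans hocc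
  have hσa : σ (Sum.inl a) = true :=
    Bool.eq_true_of_not_eq_false fun h => hF (h ▸ hσ (Sum.inl a))
  have hdom : Dominates (fun p τ => dGame m C p τ + V p τ) (Sum.inl a) (σ (Sum.inl a)) false :=
    hσa ▸ dominates_not_of_not_undominated hF
  by_contra hne
  have hgain := hdom.deviation_gain_le_gameCost hV hσ
  rw [dGame_inl_eq_zero hσa, dGame_inl_eq_one (Function.update_self ..)
    (by rwa [chosenSets_update_inl]) (by rwa [chosenSets_update_inl])] at hgain
  linarith

end ExactCover

/-- if for some `0 ≤ δ < 1` a payment promise implements the desired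
region of the degree-three game with cost at most `δ`, then the X3C instance admits an
exact cover; in fact the collection of sets whose only undominated strategy in `G[𝒱]`
is the `T`-strategy is an exact cover. -/
theorem deg3_backward (m nh : ℕ) [NeZero m] (hm : m = 3 * nh)
    (C : ZMod m → Finset (ZMod m))
    (hC : ∀ j : ZMod m, (C j).card = 3)
    (hocc : ∀ a : ZMod m, Set.ncard {j : ZMod m | a ∈ C j} = 3)
    (δ : ℝ) (hδ0 : 0 ≤ δ) (hδ1 : δ < 1)
    (V : (ZMod m ⊕ ZMod m) → ((ZMod m ⊕ ZMod m) → Bool) → ℝ)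
    (hV : ∀ p σ, 0 ≤ V p σ)
    (himpl : UndomProfiles (fun p σ => dGame m C p σ + V p σ) ⊆ rectSet (dDesired m))
    (hcost : gameCost (dGame m C) V ≤ δ) :
    IsExactCover m nh C
      {j : ZMod m |
        {b : Bool | Undominated (fun p σ => dGame m C p σ + V p σ) (Sum.inr j) b} =
          {true}} := by
  set W := fun p σ => dGame m C p σ + V p σ
  have hF : ∀ a, ¬ Undominated W (Sum.inl a) false := fun a hF =>
    Bool.false_ne_true (hF.mem_of_undomProfiles_subset himpl)
  have hone : ∀ σ ∈ UndomProfiles W, ∀ a, ((chosenSets σ).filter fun j => a ∈ C j).card = 1 :=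
    fun σ hσ a => card_filter_chosenSets_eq_one (hocc a).le hV (hF a) (hcost.trans_lt hδ1) hσ
  obtain ⟨σ, hσ⟩ := undomProfiles_nonempty W
  have hchosen : {j | {b | Undominated W (Sum.inr j) b} = {true}} = ↑(chosenSets σ) := by
    ext j
    obtain ⟨a, ha⟩ : (C j).Nonempty := Finset.card_pos.1 (by simp [hC])
    rw [Set.mem_ofPred_eq, setOf_undominated_inr_eq_singleton (fun τ hτ => hone τ hτ a) ha hσ,
      Set.singleton_eq_singleton_iff, Finset.mem_coe, mem_chosenSets]
  rw [hchosen]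
  exact isExactCover_of_card_filter_eq_one hm (fun j _ => hC j) (hone σ hσ)
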